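/- Let F be a layer solution with data (V, g), and let h : (−L, L) → ℝ be a bounded nondecreasing function. Then the map y ↦ ∫_{−L}^{L} ξ h(ξ) F(y, ξ) dξ is nonincreasing on [0, ∞). -/

import Mathlib

/-!
For `0 ≤ a ≤ b`, integrating the kinetic equation in `y` gives
`ξ (F(b, ξ) - F(a, ξ)) = ∫_a^b (M(u(y), ξ) - F(y, ξ)) dy`. Multiplying by `h(ξ)`, integrating in `ξ`
and exchanging the integrals, the increment of `∫ ξ h F` from `a` to `b` becomes
`∫_a^b (∫ h(ξ) (M(u(y), ξ) - F(y, ξ)) dξ) dy`. The inner integral is nonpositive by the variational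
principle for the Maxwellian (`setIntegral_mul_Mfun_sub_le`): among the functions `f` with
`0 ≤ sign(ξ) f(ξ) ≤ 1` and `∫ f = u`, the Maxwellian `M(u, ·)` minimises `∫ h f` for every
nondecreasing `h`. Indeed `f - M(u, ·)` is nonpositive to the left of `u` and nonnegative to the
right, so `(h - c) (f - M(u, ·)) ≥ 0` with `c = h(u)`, while `∫ (f - M(u, ·)) = 0`.
-/

open MeasureTheory Set Filter

/-- The Maxwellian `M(u, ξ)`: equals `1` on `0 < ξ < u`, `-1` on `u < ξ < 0`, `0` otherwise. -/
noncomputable def Mfun (u ξ : ℝ) : ℝ :=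
  if 0 < ξ ∧ ξ < u then 1 else if u < ξ ∧ ξ < 0 then -1 else 0

/-- A layer solution with data `(V, g)`: `F : [0,∞) × (-L,L) → ℝ` measurable, with
`0 ≤ sign ξ · F(y,ξ) ≤ 1`; for each `ξ ≠ 0`, `y ↦ F(y,ξ)` is continuous on `[0,∞)`,
differentiable on `(0,∞)` with `ξ ∂_y F = M(u(y),ξ) - F`, `u(y) = ∫_{-L}^L F(y,·)`;
`F(0,ξ) = g(ξ)` on `(0,L)`; and `∫_{-L}^L ξ F(y,ξ) dξ = V` for all `y ≥ 0`. -/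
structure IsLayerSolution (L V : ℝ) (g : ℝ → ℝ) (F : ℝ → ℝ → ℝ) : Prop where
  meas : Measurable (Function.uncurry F)
  sgnBound : ∀ y ξ, 0 ≤ y → ξ ∈ Set.Ioo (-L) L →
    0 ≤ Real.sign ξ * F y ξ ∧ Real.sign ξ * F y ξ ≤ 1
  cont : ∀ ξ ∈ Set.Ioo (-L) L, ξ ≠ 0 → ContinuousOn (fun y => F y ξ) (Set.Ici 0)
  eqn : ∀ ξ ∈ Set.Ioo (-L) L, ξ ≠ 0 → ∀ y : ℝ, 0 < y →
    ∃ d : ℝ, HasDerivAt (fun z => F z ξ) d y ∧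
      ξ * d = Mfun (∫ ζ in (-L)..L, F y ζ) ξ - F y ξ
  bdry : ∀ ξ ∈ Set.Ioo (0 : ℝ) L, F 0 ξ = g ξ
  flux : ∀ y : ℝ, 0 ≤ y → (∫ ξ in (-L)..L, ξ * F y ξ) = V

/-- The velocity interval with the origin removed: a layer solution need satisfy neither a bound
nor an equation at `ξ = 0`, which is a null set. -/
def velSet (L : ℝ) : Set ℝ := Set.Ioo (-L) L \ {0}

lemma measurableSet_velSet (L : ℝ) : MeasurableSet (velSet L) :=
  measurableSet_Ioo.diff (measurableSet_singleton 0)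

lemma volume_velSet_lt_top (L : ℝ) : volume (velSet L) < ⊤ :=
  (measure_mono sdiff_subset).trans_lt measure_Ioo_lt_top

lemma intervalIntegral_eq_velSet {L : ℝ} (hL : 0 < L) (f : ℝ → ℝ) :
    (∫ ξ in (-L)..L, f ξ) = ∫ ξ in velSet L, f ξ := by
  rw [intervalIntegral.integral_of_le (by linarith), integral_Ioc_eq_integral_Ioo]
  refine (setIntegral_congr_set ?_).symm
  exact sdiff_null_ae_eq_self (by simp)

lemma measurable_Mfun : Measurable (fun p : ℝ × ℝ => Mfun p.1 p.2) := by
  unfold Mfun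
  refine Measurable.ite ?_ measurable_const (Measurable.ite ?_ measurable_const measurable_const)
  · exact (measurableSet_lt measurable_const measurable_snd).inter
      (measurableSet_lt measurable_snd measurable_fst)
  · exact (measurableSet_lt measurable_fst measurable_snd).inter
      (measurableSet_lt measurable_snd measurable_const)

lemma abs_Mfun_le (u ξ : ℝ) : |Mfun u ξ| ≤ 1 := by
  unfold Mfun; split_ifs <;> simp

lemma integrableOn_Mfun (L u : ℝ) : IntegrableOn (Mfun u) (velSet L) := by
  refine Measure.integrableOn_of_bounded (volume_velSet_lt_top L).ne
    (measurable_Mfun.comp (measurable_const.prodMk measurable_id)).aestronglyMeasurable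
    (M := 1) (ae_of_all _ fun ξ => abs_Mfun_le u ξ)

lemma integral_Mfun {L u : ℝ} (hu : |u| ≤ L) : ∫ ξ in velSet L, Mfun u ξ = u := by
  obtain ⟨h1, h2⟩ := abs_le.1 hu
  rcases le_total 0 u with h0 | h0
  · have : Mfun u = (Ioo 0 u).indicator 1 := by
      ext ξ
      unfold Mfun
      by_cases hξ : 0 < ξ ∧ ξ < u
      · simp [hξ]
      · have h' : ¬ (u < ξ ∧ ξ < 0) := fun h => by linarith [h.1, h.2]
        simp [hξ, h', indicator, mem_Ioo]
    have hsub : velSet L ∩ Ioo 0 u = Ioo 0 u := by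
      refine inter_eq_right.2 fun ξ hξ => ?_
      exact ⟨⟨by linarith [hξ.1], by linarith [hξ.2]⟩, hξ.1.ne'⟩
    rw [this, setIntegral_indicator measurableSet_Ioo, hsub]
    simp [h0]
  · have : Mfun u = (Ioo u 0).indicator (fun _ => -1) := by
      ext ξ
      unfold Mfun
      have h' : ¬ (0 < ξ ∧ ξ < u) := fun h => by linarith [h.1, h.2]
      simp [h', indicator, mem_Ioo]
    have hsub : velSet L ∩ Ioo u 0 = Ioo u 0 := by
      refine inter_eq_right.2 fun ξ hξ => ?_
      exact ⟨⟨by linarith [hξ.1], by linarith [hξ.2]⟩, hξ.2.ne⟩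
    rw [this, setIntegral_indicator measurableSet_Ioo, hsub]
    simp [h0]

/-- The pointwise bound `0 ≤ sign(ξ) f(ξ) ≤ 1` on the velocity interval, split by the sign
of `ξ`. -/
def IsAdmissible (L : ℝ) (f : ℝ → ℝ) : Prop :=
  ∀ ξ ∈ velSet L, (0 < ξ → 0 ≤ f ξ ∧ f ξ ≤ 1) ∧ (ξ < 0 → -1 ≤ f ξ ∧ f ξ ≤ 0)

lemma IsAdmissible.abs_le {L : ℝ} {f : ℝ → ℝ} (hf : IsAdmissible L f) {ξ : ℝ}
    (hξ : ξ ∈ velSet L) : |f ξ| ≤ 1 := by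
  rw [_root_.abs_le]
  rcases lt_or_gt_of_ne hξ.2 with h | h
  · have := (hf ξ hξ).2 h; constructor <;> linarith
  · have := (hf ξ hξ).1 h; constructor <;> linarith

lemma IsAdmissible.integrableOn {L : ℝ} {f : ℝ → ℝ} (hf : IsAdmissible L f)
    (hm : Measurable f) : IntegrableOn f (velSet L) :=
  Measure.integrableOn_of_bounded (volume_velSet_lt_top L).ne hm.aestronglyMeasurable
    (M := 1) ((ae_restrict_iff' (measurableSet_velSet L)).2
      (ae_of_all _ fun _ hξ => hf.abs_le hξ))

/-- The extreme admissible functions are `M(L, ·)` and `M(-L, ·)`, whose integrals are `±L`. -/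
lemma IsAdmissible.abs_integral_le {L : ℝ} (hL : 0 < L) {f : ℝ → ℝ} (hf : IsAdmissible L f)
    (hm : Measurable f) : |∫ ξ in velSet L, f ξ| ≤ L := by
  rw [_root_.abs_le]
  constructor
  · rw [← integral_Mfun (L := L) (u := -L) (by rw [abs_neg, abs_of_pos hL])]
    refine setIntegral_mono_on (integrableOn_Mfun L _) (hf.integrableOn hm)
      (measurableSet_velSet L) fun ξ hξ => ?_
    rcases lt_or_gt_of_ne hξ.2 with h | h
    · have h1 : ¬ (0 < ξ ∧ ξ < -L) := fun h' => by linarith [h'.1]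
      have := (hf ξ hξ).2 h
      simp only [Mfun, if_neg h1, if_pos (show -L < ξ ∧ ξ < 0 from ⟨hξ.1.1, h⟩)]
      linarith
    · have h1 : ¬ (0 < ξ ∧ ξ < -L) := fun h' => by linarith [h'.1, h'.2]
      have h2 : ¬ (-L < ξ ∧ ξ < 0) := fun h' => by linarith [h'.2]
      simp only [Mfun, if_neg h1, if_neg h2]
      exact ((hf ξ hξ).1 h).1
  · conv_rhs => rw [← integral_Mfun (L := L) (u := L) (by rw [abs_of_pos hL])]
    refine setIntegral_mono_on (hf.integrableOn hm) (integrableOn_Mfun L _)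
      (measurableSet_velSet L) fun ξ hξ => ?_
    rcases lt_or_gt_of_ne hξ.2 with h | h
    · have h1 : ¬ (0 < ξ ∧ ξ < L) := fun h' => by linarith [h'.1]
      have h2 : ¬ (L < ξ ∧ ξ < 0) := fun h' => by linarith [h'.1, h'.2]
      simp only [Mfun, if_neg h1, if_neg h2]
      exact ((hf ξ hξ).2 h).2
    · simp only [Mfun, if_pos (show 0 < ξ ∧ ξ < L from ⟨h, hξ.1.2⟩)]
      exact ((hf ξ hξ).1 h).2

lemma IsAdmissible.sub_Mfun_nonpos {L u : ℝ} {f : ℝ → ℝ} (hf : IsAdmissible L f) {ξ : ℝ}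
    (hξ : ξ ∈ velSet L) (h : ξ < u) : f ξ - Mfun u ξ ≤ 0 := by
  have h2 : ¬ (u < ξ ∧ ξ < 0) := fun h' => by linarith [h'.1]
  have := hf ξ hξ
  rcases lt_or_gt_of_ne hξ.2 with h0 | h0
  · have h1 : ¬ (0 < ξ ∧ ξ < u) := fun h' => by linarith [h'.1]
    simp only [Mfun, if_neg h1, if_neg h2]
    linarith [(this.2 h0).2]
  · simp only [Mfun, if_pos (show 0 < ξ ∧ ξ < u from ⟨h0, h⟩)]
    linarith [(this.1 h0).2]

lemma IsAdmissible.sub_Mfun_nonneg {L u : ℝ} {f : ℝ → ℝ} (hf : IsAdmissible L f) {ξ : ℝ}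
    (hξ : ξ ∈ velSet L) (h : u < ξ) : 0 ≤ f ξ - Mfun u ξ := by
  have h1 : ¬ (0 < ξ ∧ ξ < u) := fun h' => by linarith [h'.2]
  have := hf ξ hξ
  rcases lt_or_gt_of_ne hξ.2 with h0 | h0
  · simp only [Mfun, if_neg h1, if_pos (show u < ξ ∧ ξ < 0 from ⟨h, h0⟩)]
    linarith [(this.2 h0).1]
  · have h2 : ¬ (u < ξ ∧ ξ < 0) := fun h' => by linarith [h'.2]
    simp only [Mfun, if_neg h1, if_neg h2]
    linarith [(this.1 h0).1]

/-- The variational principle: among admissible functions with integral `u`, the Maxwellian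
`M(u, ·)` minimises the integral against a nondecreasing weight. -/
lemma setIntegral_mul_Mfun_sub_le {L : ℝ} (hL : 0 < L) {h f : ℝ → ℝ} {C : ℝ}
    (hmono : MonotoneOn h (Ioo (-L) L)) (hC : ∀ ξ ∈ Ioo (-L) L, |h ξ| ≤ C)
    (hf : IsAdmissible L f) (hm : Measurable f) {u : ℝ} (hu : u = ∫ ξ in velSet L, f ξ) :
    ∫ ξ in velSet L, h ξ * (Mfun u ξ - f ξ) ≤ 0 := by
  have habs : |u| ≤ L := hu ▸ hf.abs_integral_le hL hm
  obtain ⟨hu1, hu2⟩ := abs_le.1 habs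
  -- The constant `c` plays the role of `h u`, which is not available when `u = ± L`.
  obtain ⟨c, hc1, hc2⟩ : ∃ c, (∀ ξ ∈ velSet L, ξ ≤ u → h ξ ≤ c) ∧
      (∀ ξ ∈ velSet L, u ≤ ξ → c ≤ h ξ) := by
    rcases hu1.eq_or_lt with e | h1
    · exact ⟨-C, fun ξ hξ h' => absurd hξ.1.1 (by linarith),
        fun ξ hξ _ => (abs_le.1 (hC ξ hξ.1)).1⟩
    rcases hu2.eq_or_lt with e | h2
    · exact ⟨C, fun ξ hξ _ => (abs_le.1 (hC ξ hξ.1)).2,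
        fun ξ hξ h' => absurd hξ.1.2 (by linarith)⟩
    · exact ⟨h u, fun ξ hξ h' => hmono hξ.1 ⟨h1, h2⟩ h',
        fun ξ hξ h' => hmono ⟨h1, h2⟩ hξ.1 h'⟩
  have hint : IntegrableOn (fun ξ => Mfun u ξ - f ξ) (velSet L) :=
    (integrableOn_Mfun L u).sub (hf.integrableOn hm)
  have hzero : ∫ ξ in velSet L, c * (Mfun u ξ - f ξ) = 0 := by
    rw [integral_const_mul, integral_sub (integrableOn_Mfun L u) (hf.integrableOn hm),
      integral_Mfun habs, ← hu, sub_self, mul_zero]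
  have hh : AEStronglyMeasurable h (volume.restrict (velSet L)) :=
    (aemeasurable_restrict_of_monotoneOn (measurableSet_velSet L)
      (hmono.mono sdiff_subset)).aestronglyMeasurable
  rw [← hzero]
  refine setIntegral_mono_on ?_ (hint.const_mul c) (measurableSet_velSet L) fun ξ hξ => ?_
  · exact hint.bdd_mul hh ((ae_restrict_iff' (measurableSet_velSet L)).2
      (ae_of_all _ fun ξ hξ => hC ξ hξ.1))
  · rcases lt_trichotomy ξ u with h' | h' | h'
    · nlinarith [hf.sub_Mfun_nonpos hξ h', hc1 ξ hξ h'.le]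
    · rw [le_antisymm (hc1 ξ hξ h'.le) (hc2 ξ hξ h'.ge)]
    · nlinarith [hf.sub_Mfun_nonneg hξ h', hc2 ξ hξ h'.le]

lemma IsLayerSolution.isAdmissible {L V : ℝ} {g : ℝ → ℝ} {F : ℝ → ℝ → ℝ}
    (hF : IsLayerSolution L V g F) {y : ℝ} (hy : 0 ≤ y) : IsAdmissible L (F y) := by
  intro ξ hξ
  have := hF.sgnBound y ξ hy hξ.1
  constructor <;> intro h
  · rw [Real.sign_of_pos h] at this
    constructor <;> linarith
  · rw [Real.sign_of_neg h] at this
    constructor <;> linarith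

/-- Measurability of the collision term, with the macroscopic density `u` written as an integral
over the punctured velocity interval. -/
lemma IsLayerSolution.measurable_collision {L V : ℝ} {g : ℝ → ℝ} {F : ℝ → ℝ → ℝ}
    (hF : IsLayerSolution L V g F) :
    Measurable (fun p : ℝ × ℝ => Mfun (∫ ζ in velSet L, F p.2 ζ) p.1 - F p.2 p.1) := by
  have hu : Measurable (fun y => ∫ ζ in velSet L, F y ζ) :=
    (hF.meas.stronglyMeasurable.integral_prod_right'
      (ν := volume.restrict (velSet L))).measurable
  exact (measurable_Mfun.comp ((hu.comp measurable_snd).prodMk measurable_fst)).sub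
    (hF.meas.comp (measurable_snd.prodMk measurable_fst))

lemma IsLayerSolution.abs_collision_le {L V : ℝ} {g : ℝ → ℝ} {F : ℝ → ℝ → ℝ}
    (hF : IsLayerSolution L V g F) {y ξ : ℝ} (hy : 0 ≤ y) (hξ : ξ ∈ velSet L) (u : ℝ) :
    |Mfun u ξ - F y ξ| ≤ 2 := by
  have h1 := abs_Mfun_le u ξ
  have h2 := (hF.isAdmissible hy).abs_le hξ
  have h3 := abs_sub (Mfun u ξ) (F y ξ)
  linarith

/-- The kinetic equation integrated in `y`. -/
lemma IsLayerSolution.increment {L V : ℝ} (hL : 0 < L) {g : ℝ → ℝ} {F : ℝ → ℝ → ℝ}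
    (hF : IsLayerSolution L V g F) {a b : ℝ} (ha : 0 ≤ a) (hab : a ≤ b) {ξ : ℝ}
    (hξ : ξ ∈ velSet L) :
    ξ * (F b ξ - F a ξ) = ∫ y in Ioc a b, (Mfun (∫ ζ in velSet L, F y ζ) ξ - F y ξ) := by
  have hξ0 : ξ ≠ 0 := hξ.2
  have hint : IntegrableOn (fun y => Mfun (∫ ζ in velSet L, F y ζ) ξ - F y ξ) (Ioc a b) :=
    Measure.integrableOn_of_bounded measure_Ioc_lt_top.ne
      (hF.measurable_collision.comp (measurable_const.prodMk measurable_id)).aestronglyMeasurable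
      (M := 2) ((ae_restrict_iff' measurableSet_Ioc).2
        (ae_of_all _ fun y hy => hF.abs_collision_le (ha.trans hy.1.le) hξ _))
  rw [← intervalIntegral.integral_of_le hab]
  have := intervalIntegral.integral_eq_sub_of_hasDerivAt_of_le hab
    (f := fun y => ξ * F y ξ)
    (((hF.cont ξ hξ.1 hξ0).mono fun y hy => ha.trans hy.1).const_smul ξ)
    (fun y hy => ?_) ((intervalIntegrable_iff_integrableOn_Ioc_of_le hab).2 hint)
  · rw [this]; ring
  · obtain ⟨d, hd, hd'⟩ := hF.eqn ξ hξ.1 hξ0 y (ha.trans_lt hy.1)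
    rw [← intervalIntegral_eq_velSet hL, ← hd']
    exact hd.const_mul ξ

theorem stmt12 (L V : ℝ) (hL : 0 < L) (g : ℝ → ℝ) (hgm : Measurable g)
    (hg01 : ∀ ξ ∈ Set.Ioo (0 : ℝ) L, g ξ ∈ Set.Icc (0 : ℝ) 1)
    (hV : V ∈ Set.Icc 0 (L ^ 2 / 2))
    (F : ℝ → ℝ → ℝ) (hF : IsLayerSolution L V g F)
    (h : ℝ → ℝ) (hmono : MonotoneOn h (Set.Ioo (-L) L))
    (hbound : ∃ C : ℝ, ∀ ξ ∈ Set.Ioo (-L) L, |h ξ| ≤ C) :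
    AntitoneOn (fun y => ∫ ξ in (-L)..L, ξ * h ξ * F y ξ) (Set.Ici 0) := by
  obtain ⟨C, hC⟩ := hbound
  intro a ha b hb hab
  have ha : (0 : ℝ) ≤ a := ha
  have hb : (0 : ℝ) ≤ b := hb
  have hS := measurableSet_velSet L
  have hh : AEStronglyMeasurable h (volume.restrict (velSet L)) :=
    (aemeasurable_restrict_of_monotoneOn hS (hmono.mono sdiff_subset)).aestronglyMeasurable
  have : IsFiniteMeasure (volume.restrict (velSet L)) :=
    isFiniteMeasure_restrict.2 (volume_velSet_lt_top L).ne
  have hcol := hF.measurable_collision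
  have hint : ∀ y, 0 ≤ y → IntegrableOn (fun ξ => ξ * h ξ * F y ξ) (velSet L) := by
    intro y hy
    refine Integrable.of_bound ((aestronglyMeasurable_id.mul hh).mul
        (hF.meas.comp (measurable_const.prodMk measurable_id)).aestronglyMeasurable)
      (L * C * 1) ((ae_restrict_iff' hS).2 (ae_of_all _ fun ξ hξ => ?_))
    have hCξ := hC ξ hξ.1
    rw [Real.norm_eq_abs, abs_mul, abs_mul]
    have := abs_lt.2 hξ.1
    have hC0 : 0 ≤ C := (abs_nonneg _).trans hCξ
    exact mul_le_mul (mul_le_mul this.le hCξ (abs_nonneg _) hL.le)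
      ((hF.isAdmissible hy).abs_le hξ) (abs_nonneg _) (by positivity)
  -- Boundedness on a set of finite measure justifies exchanging the two integrals.
  have hprod : Integrable (fun p : ℝ × ℝ =>
      h p.1 * (Mfun (∫ ζ in velSet L, F p.2 ζ) p.1 - F p.2 p.1))
      ((volume.restrict (velSet L)).prod (volume.restrict (Ioc a b))) := by
    have hms : AEStronglyMeasurable (fun p : ℝ × ℝ =>
        h p.1 * (Mfun (∫ ζ in velSet L, F p.2 ζ) p.1 - F p.2 p.1))
        ((volume.restrict (velSet L)).prod (volume.restrict (Ioc a b))) :=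
      hh.comp_fst.mul hcol.aestronglyMeasurable
    refine Integrable.of_bound hms (C * 2) ?_
    rw [Measure.prod_restrict, ae_restrict_iff' (hS.prod measurableSet_Ioc)]
    refine ae_of_all _ fun p hp => ?_
    have hCξ := hC p.1 hp.1.1
    rw [Real.norm_eq_abs, abs_mul]
    exact mul_le_mul hCξ (hF.abs_collision_le (ha.trans hp.2.1.le) hp.1 _) (abs_nonneg _)
      ((abs_nonneg _).trans hCξ)
  have key : (∫ ξ in velSet L, ξ * h ξ * F b ξ) - ∫ ξ in velSet L, ξ * h ξ * F a ξ ≤ 0 := by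
    rw [← integral_sub (hint b hb) (hint a ha)]
    calc _ = ∫ ξ in velSet L, ∫ y in Ioc a b,
          h ξ * (Mfun (∫ ζ in velSet L, F y ζ) ξ - F y ξ) := by
          refine setIntegral_congr_fun hS fun ξ hξ => ?_
          rw [integral_const_mul, ← hF.increment hL ha hab hξ]
          ring
      _ = ∫ y in Ioc a b, ∫ ξ in velSet L,
          h ξ * (Mfun (∫ ζ in velSet L, F y ζ) ξ - F y ξ) := integral_integral_swap hprod
      _ ≤ 0 := setIntegral_nonpos measurableSet_Ioc fun y hy =>
          setIntegral_mul_Mfun_sub_le hL hmono hC (hF.isAdmissible (ha.trans hy.1.le))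
            (hF.meas.comp (measurable_const.prodMk measurable_id)) rfl
  simp only [intervalIntegral_eq_velSet hL]
  linarith
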